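/- Let w ∈ ℂ with Im w ≠ 0. Then the function v ↦ (1 − e^{2πiv} + 2πiv)/(v²·(w − v)) (extended continuously at v = 0, since 1 − e^{2πiv} + 2πiv = O(v²) near 0) is absolutely integrable on ℝ, and (1/(4π²)) · ∫_ℝ (1 − e^{2πiv} + 2πiv)/(v²·(w − v)) dv equals (1 − e^{2πiw} + 2πiw)/(2πi·w²) if Im w > 0, and equals 0 if Im w < 0. -/

import Mathlib

open MeasureTheory

/-!
The numerator divided by `z ^ 2` is `4π² f(z)` with `f(z) = φ₂(2πiz)` entire, and `f` is `O(1/|z|)`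
in the closed upper half-plane, where `Re (2πiz) ≤ 0`. By Cauchy's theorem on the squares
`[-R, R] × [0, R]`, the integral over `[-R, R]` of a function that is holomorphic in the upper
half-plane, continuous up to the real line and `o(1/|z|)` tends to `0`. If `Im w < 0`, this applies
to `f(z)/(z - w)`. If `Im w > 0`, the pole is removed by writing
`f(z)/(z - w) = [(f(z) - f(w))/(z - w) + f(w)/(z - w̄)] + f(w) [1/(z - w) - 1/(z - w̄)]`.
The first bracket is holomorphic, and the term `f(w)/(z - w̄)` improves its decay from `O(1/|z|)` to
`o(1/|z|)`. On the real line the second bracket is `2πi` times a Cauchy probability density.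
-/

section

open Asymptotics Bornology Complex ComplexConjugate Filter ProbabilityTheory Topology
open UpperHalfPlane (upperHalfPlaneSet isOpen_upperHalfPlaneSet)

/-- The filter of neighbourhoods of infinity in the closed upper half-plane: a limit along it is
uniform in the argument of `z`, real directions included. -/
noncomputable def upperCobounded : Filter ℂ := cobounded ℂ ⊓ 𝓟 {z | 0 ≤ z.im}

lemma eventually_upperCobounded {p : ℂ → Prop} :
    (∀ᶠ z in upperCobounded, p z) ↔ ∃ R : ℝ, ∀ z : ℂ, R ≤ ‖z‖ → 0 ≤ z.im → p z := by
  simp [upperCobounded, eventually_inf_principal, hasBasis_cobounded_norm.eventually_iff]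

lemma tendsto_ofReal_upperCobounded :
    Tendsto ((↑) : ℝ → ℂ) (cobounded ℝ) upperCobounded :=
  tendsto_inf.mpr ⟨RCLike.tendsto_ofReal_cobounded_cobounded ℂ, tendsto_principal.mpr <| by simp⟩

section Asymptotics

lemma isBigO_inv_sub (w : ℂ) : (fun z => (z - w)⁻¹) =O[cobounded ℂ] Inv.inv :=
  (spectrum.resolvent_isBigO_inv w).congr_left fun z => by simp [resolvent]

lemma isLittleO_inv_sub_smul {E : Type*} [NormedAddCommGroup E] [NormedSpace ℂ E] {f : ℂ → E}
    {l : Filter ℂ} (hl : l ≤ cobounded ℂ) (hf : Tendsto f l (𝓝 0)) (w : ℂ) :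
    (fun z => (z - w)⁻¹ • f z) =o[l] Inv.inv := by
  simpa using! ((isBigO_inv_sub w).mono hl).smul_isLittleO ((isLittleO_one_iff ℂ).mpr hf)

lemma isLittleO_inv_sub_sub_inv_sub (a b : ℂ) :
    (fun z => (z - a)⁻¹ - (z - b)⁻¹) =o[cobounded ℂ] Inv.inv := by
  have hb : Tendsto (fun z => (a - b) * (z - b)⁻¹) (cobounded ℂ) (𝓝 0) := by
    simpa using ((isBigO_inv_sub b).trans_tendsto tendsto_inv₀_cobounded).const_mul (a - b)
  refine (isLittleO_inv_sub_smul le_rfl hb a).congr' ?_ .rfl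
  filter_upwards [eventually_ne_cobounded a, eventually_ne_cobounded b] with z hza hzb
  have : z - a ≠ 0 := sub_ne_zero.mpr hza
  have : z - b ≠ 0 := sub_ne_zero.mpr hzb
  simp only [smul_eq_mul]
  field_simp
  ring

end Asymptotics

section Contour

variable {E : Type*} [NormedAddCommGroup E] [NormedSpace ℂ E] {f : ℂ → E}

lemma continuous_comp_ofReal_of_diffContOnCl_upperHalfPlaneSet
    (hf : DiffContOnCl ℂ f upperHalfPlaneSet) :
    Continuous fun v : ℝ => f v :=
  hf.continuousOn.comp_continuous continuous_ofReal fun v => by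
    simp [closure_setOfPred_lt_im]

lemma integral_square_eq_of_diffContOnCl_upperHalfPlaneSet
    (hf : DiffContOnCl ℂ f upperHalfPlaneSet) {R : ℝ} (hR : 0 ≤ R) :
    ∫ v in -R..R, f v = (∫ x in -R..R, f (x + R * I)) - I • (∫ y in (0)..R, f (R + y * I)) +
      I • ∫ y in (0)..R, f (-R + y * I) := by
  have hsquare := integral_boundary_rect_eq_zero_of_continuousOn_of_differentiableOn f (-R)
    (R + R * I)
    (hf.continuousOn.mono fun z hz => by
      have him : z.im ∈ Set.Icc 0 R := by
        simpa [Set.uIcc_of_le hR] using (mem_reProdIm.mp hz).2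
      simpa [closure_setOfPred_lt_im] using him.1)
    (hf.differentiableOn.mono fun z hz => by simpa [hR] using (mem_reProdIm.mp hz).2.1)
  simp only [neg_re, neg_im, ofReal_re, ofReal_im, add_re, add_im, mul_re, mul_im, I_re, I_im,
    mul_zero, mul_one, zero_add, add_zero, sub_zero, neg_zero, ofReal_zero, zero_mul,
    ofReal_neg] at hsquare
  rw [← sub_eq_zero, ← hsquare]
  abel

lemma norm_integral_le_of_diffContOnCl_upperHalfPlaneSet
    (hf : DiffContOnCl ℂ f upperHalfPlaneSet) {R M : ℝ} (hR : 0 ≤ R)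
    (hM : ∀ z : ℂ, R ≤ ‖z‖ → 0 ≤ z.im → ‖f z‖ ≤ M) :
    ‖∫ v in -R..R, f v‖ ≤ 4 * R * M := by
  have htop : ‖∫ x in -R..R, f (x + R * I)‖ ≤ M * |R - -R| :=
    intervalIntegral.norm_integral_le_of_norm_le_const fun x _ =>
      hM _ (by simpa [abs_of_nonneg hR] using abs_im_le_norm (x + R * I)) (by simpa)
  have hside (r : ℝ) (hr : |r| = R) : ‖∫ y in (0)..R, f (r + y * I)‖ ≤ M * |R - 0| :=
    intervalIntegral.norm_integral_le_of_norm_le_const fun y hy => by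
      rw [Set.uIoc_of_le hR] at hy
      exact hM _ (by simpa [hr] using abs_re_le_norm (r + y * I)) (by simpa using hy.1.le)
  have hright := hside R (abs_of_nonneg hR)
  have hleft := hside (-R) (by rw [abs_neg, abs_of_nonneg hR])
  rw [sub_zero, abs_of_nonneg hR] at hright hleft
  rw [sub_neg_eq_add, abs_of_nonneg (by positivity)] at htop
  push_cast at hleft
  rw [integral_square_eq_of_diffContOnCl_upperHalfPlaneSet hf hR]
  calc _ ≤ M * (R + R) + M * R + M * R := by
        refine norm_add_le_of_le (norm_sub_le_of_le htop ?_) ?_ <;> simpa [norm_smul]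
    _ = 4 * R * M := by ring

theorem tendsto_intervalIntegral_zero_of_diffContOnCl_upperHalfPlaneSet
    (hf : DiffContOnCl ℂ f upperHalfPlaneSet) (hdecay : f =o[upperCobounded] Inv.inv) :
    Tendsto (fun R : ℝ => ∫ v in -R..R, f v) atTop (𝓝 0) := by
  rw [Metric.tendsto_nhds]
  intro ε hε
  obtain ⟨R₀, hR₀⟩ := eventually_upperCobounded.mp (hdecay.def (show 0 < ε / 8 by positivity))
  filter_upwards [eventually_ge_atTop R₀, eventually_gt_atTop 0] with R hR hRpos
  have hM (z : ℂ) (hz : R ≤ ‖z‖) (him : 0 ≤ z.im) : ‖f z‖ ≤ ε / 8 * R⁻¹ :=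
    (hR₀ z (hR.trans hz) him).trans (by rw [norm_inv]; gcongr)
  rw [dist_zero_right]
  calc ‖∫ v in -R..R, f v‖ ≤ 4 * R * (ε / 8 * R⁻¹) :=
        norm_integral_le_of_diffContOnCl_upperHalfPlaneSet hf hRpos.le hM
    _ = ε / 2 := by field_simp; norm_num
    _ < ε := half_lt_self hε

end Contour

section CauchyFormula

variable {E : Type*} [NormedAddCommGroup E] [NormedSpace ℂ E] {f : ℂ → E} {w : ℂ}

lemma integral_eq_of_tendsto_intervalIntegral_symm {g : ℝ → E} {a : E} (hg : Integrable g)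
    (ha : Tendsto (fun R : ℝ => ∫ v in -R..R, g v) atTop (𝓝 a)) : ∫ v, g v = a :=
  tendsto_nhds_unique
    (intervalIntegral_tendsto_integral hg tendsto_neg_atTop_atBot tendsto_id) ha

lemma ofReal_sub_ne_zero (hw : w.im ≠ 0) (v : ℝ) : (v : ℂ) - w ≠ 0 := fun h =>
  hw (by simpa using congrArg im h)

lemma integrable_inv_sub_smul {g : ℝ → E} (hw : w.im ≠ 0) (hg : Continuous g)
    (hdecay : g =O[cobounded ℝ] Inv.inv) : Integrable fun v : ℝ => (v - w : ℂ)⁻¹ • g v := by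
  have hcont : Continuous fun v : ℝ => (v - w : ℂ)⁻¹ • g v :=
    (Continuous.inv₀ (by fun_prop) (ofReal_sub_ne_zero hw)).smul hg
  have hkernel : (fun v : ℝ => (v - w : ℂ)⁻¹) =O[cobounded ℝ] fun v : ℝ => v⁻¹ :=
    ((isBigO_inv_sub w).comp_tendsto (RCLike.tendsto_ofReal_cobounded_cobounded ℂ)).trans <|
      .of_bound' (.of_forall fun v => by simp)
  have hsq : (fun v : ℝ => v⁻¹ • v⁻¹) =O[cobounded ℝ] fun v : ℝ => (1 + v ^ 2)⁻¹ := by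
    refine .of_bound 2 ?_
    filter_upwards [tendsto_norm_cobounded_atTop.eventually_ge_atTop 1] with v hv
    have hv1 : 1 ≤ v ^ 2 := by rwa [one_le_sq_iff_one_le_abs]
    rw [smul_eq_mul, ← mul_inv, ← sq, Real.norm_of_nonneg (by positivity),
      Real.norm_of_nonneg (by positivity), ← div_eq_mul_inv, inv_eq_one_div,
      div_le_div_iff₀ (by positivity) (by positivity)]
    linarith
  refine hcont.locallyIntegrable.integrable_of_isBigO_cocompact ?_
    (integrable_inv_one_add_sq.integrableAtFilter _)
  rw [← Metric.cobounded_eq_cocompact]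
  exact (hkernel.smul hdecay).trans hsq

lemma diffContOnCl_inv_sub_upperHalfPlaneSet (hw : w.im < 0) :
    DiffContOnCl ℂ (fun z => (z - w)⁻¹) upperHalfPlaneSet := by
  refine (differentiable_id.sub_const w).diffContOnCl.inv fun z hz h => ?_
  rw [closure_setOfPred_lt_im] at hz
  rw [← sub_eq_zero.mp h] at hw
  exact hw.not_ge hz

theorem tendsto_intervalIntegral_inv_sub_smul_of_im_neg
    (hf : DiffContOnCl ℂ f upperHalfPlaneSet) (hf0 : Tendsto f upperCobounded (𝓝 0))
    (hw : w.im < 0) :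
    Tendsto (fun R : ℝ => ∫ v in -R..R, (v - w : ℂ)⁻¹ • f v) atTop (𝓝 0) :=
  tendsto_intervalIntegral_zero_of_diffContOnCl_upperHalfPlaneSet
    ((diffContOnCl_inv_sub_upperHalfPlaneSet hw).smul hf)
    (isLittleO_inv_sub_smul inf_le_left hf0 w)

lemma diffContOnCl_dslope_upperHalfPlaneSet [CompleteSpace E]
    (hf : DiffContOnCl ℂ f upperHalfPlaneSet) (hw : 0 < w.im) :
    DiffContOnCl ℂ (dslope f w) upperHalfPlaneSet where
  differentiableOn :=
    (differentiableOn_dslope (isOpen_upperHalfPlaneSet.mem_nhds hw)).mpr hf.differentiableOn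
  continuousOn :=
    (continuousOn_dslope <| mem_of_superset (isOpen_upperHalfPlaneSet.mem_nhds hw)
      subset_closure).mpr ⟨hf.continuousOn, hf.differentiableAt isOpen_upperHalfPlaneSet hw⟩

lemma inv_sub_sub_inv_sub_conj (hw : 0 < w.im) (v : ℝ) :
    (v - w : ℂ)⁻¹ - (v - conj w)⁻¹ =
      2 * Real.pi * I * cauchyPDFReal w.re w.im.toNNReal v := by
  have hsq : ((v - w.re) ^ 2 + w.im ^ 2 : ℂ) = (v - w) * (v - conj w) := by
    apply Complex.ext
    · simp [sq]
    · simp [sq]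
      ring
  have hsub : w - conj w = 2 * w.im * I := by simp [sub_conj]
  rw [inv_sub_inv (ofReal_sub_ne_zero hw.ne' v) (ofReal_sub_ne_zero (by simpa using hw.ne') v),
    sub_sub_sub_cancel_left, hsub, ← hsq, cauchyPDFReal_def, Real.coe_toNNReal _ hw.le]
  push_cast
  have := Real.pi_ne_zero
  field_simp

lemma integrable_inv_sub_sub_inv_sub_conj (hw : 0 < w.im) :
    Integrable fun v : ℝ => (v - w : ℂ)⁻¹ - (v - conj w)⁻¹ := by
  simp only [inv_sub_sub_inv_sub_conj hw]
  exact (integrable_cauchyPDFReal _).ofReal.const_mul _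

lemma integral_inv_sub_sub_inv_sub_conj (hw : 0 < w.im) :
    ∫ v : ℝ, ((v - w : ℂ)⁻¹ - (v - conj w)⁻¹) = 2 * Real.pi * I := by
  simp only [inv_sub_sub_inv_sub_conj hw]
  rw [integral_const_mul, integral_complex_ofReal,
    integral_cauchyPDFReal_eq_one _ (Real.toNNReal_pos.mpr hw).ne', ofReal_one, mul_one]

lemma dslope_add_inv_sub_smul {z : ℂ} (hz : z ≠ w) (b : ℂ) :
    dslope f w z + (z - b)⁻¹ • f w = (z - w)⁻¹ • f z - ((z - w)⁻¹ - (z - b)⁻¹) • f w := by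
  rw [dslope_of_ne f hz, slope_def_module]
  module

lemma isLittleO_dslope_add_inv_sub_smul {l : Filter ℂ} (hl : l ≤ cobounded ℂ)
    (hf : Tendsto f l (𝓝 0)) (w b : ℂ) :
    (fun z => dslope f w z + (z - b)⁻¹ • f w) =o[l] Inv.inv := by
  have hkernel : (fun z => ((z - w)⁻¹ - (z - b)⁻¹) • f w) =o[cobounded ℂ] Inv.inv := by
    simpa using! (isLittleO_inv_sub_sub_inv_sub w b).smul_isBigO
      (isBigO_const_const (f w) (one_ne_zero' ℂ) _)
  refine ((isLittleO_inv_sub_smul hl hf w).sub (hkernel.mono hl)).congr' ?_ .rfl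
  filter_upwards [hl (eventually_ne_cobounded w)] with z hz
  exact (dslope_add_inv_sub_smul hz b).symm

theorem tendsto_intervalIntegral_inv_sub_smul_of_im_pos [CompleteSpace E]
    (hf : DiffContOnCl ℂ f upperHalfPlaneSet) (hf0 : Tendsto f upperCobounded (𝓝 0))
    (hw : 0 < w.im) :
    Tendsto (fun R : ℝ => ∫ v in -R..R, (v - w : ℂ)⁻¹ • f v) atTop
      (𝓝 ((2 * Real.pi * I : ℂ) • f w)) := by
  have hdiff : DiffContOnCl ℂ (fun z => dslope f w z + (z - conj w)⁻¹ • f w) upperHalfPlaneSet :=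
    (diffContOnCl_dslope_upperHalfPlaneSet hf hw).add <|
      (diffContOnCl_inv_sub_upperHalfPlaneSet (by simpa)).smul_const (f w)
  have hregular := tendsto_intervalIntegral_zero_of_diffContOnCl_upperHalfPlaneSet hdiff
    (isLittleO_dslope_add_inv_sub_smul inf_le_left hf0 w (conj w))
  have hkernel : Integrable fun v : ℝ => ((v - w : ℂ)⁻¹ - (v - conj w)⁻¹) • f w :=
    (integrable_inv_sub_sub_inv_sub_conj hw).smul_const _
  have hpolar := intervalIntegral_tendsto_integral hkernel tendsto_neg_atTop_atBot tendsto_id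
  rw [integral_smul_const, integral_inv_sub_sub_inv_sub_conj hw] at hpolar
  refine (zero_add ((2 * Real.pi * I : ℂ) • f w) ▸ hregular.add hpolar).congr fun R => ?_
  rw [id, ← intervalIntegral.integral_add
    ((continuous_comp_ofReal_of_diffContOnCl_upperHalfPlaneSet hdiff).intervalIntegrable _ _)
    hkernel.intervalIntegrable]
  refine intervalIntegral.integral_congr fun v _ => ?_
  rw [dslope_add_inv_sub_smul (sub_ne_zero.mp (ofReal_sub_ne_zero hw.ne' v)), sub_add_cancel]

end CauchyFormula

section PhiTwo

/-- The entire function `φ₂(u) = (eᵘ - 1 - u) / u²`, encoded as an iterated divided difference of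
the exponential at `0`, which gives it the limiting value at `u = 0`. -/
noncomputable def phiTwo : ℂ → ℂ := dslope (dslope exp 0) 0

lemma differentiable_dslope {E : Type*} [NormedAddCommGroup E] [NormedSpace ℂ E] [CompleteSpace E]
    {f : ℂ → E} (hf : Differentiable ℂ f) (c : ℂ) : Differentiable ℂ (dslope f c) :=
  differentiableOn_univ.mp <|
    (differentiableOn_dslope univ_mem).mpr hf.differentiableOn

lemma differentiable_phiTwo : Differentiable ℂ phiTwo :=
  differentiable_dslope (differentiable_dslope differentiable_exp 0) 0

lemma phiTwo_of_ne_zero {u : ℂ} (hu : u ≠ 0) : phiTwo u = (exp u - 1 - u) / u ^ 2 := by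
  rw [phiTwo, dslope_of_ne _ hu, slope_def_field, dslope_of_ne _ hu, slope_def_field, dslope_same,
    Complex.deriv_exp, exp_zero]
  field_simp
  ring

lemma isBigO_phiTwo : phiTwo =O[cobounded ℂ ⊓ 𝓟 {u | u.re ≤ 0}] Inv.inv := by
  refine .of_bound 3 ?_
  rw [eventually_inf_principal]
  filter_upwards [tendsto_norm_cobounded_atTop.eventually_ge_atTop 1] with u hu (hre : u.re ≤ 0)
  have hu0 : u ≠ 0 := norm_pos_iff.mp (one_pos.trans_le hu)
  have hexp : ‖exp u‖ ≤ 1 := by rwa [norm_exp, Real.exp_le_one_iff]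
  have hnum : ‖exp u - 1 - u‖ ≤ 3 * ‖u‖ :=
    calc ‖exp u - 1 - u‖ ≤ 1 + 1 + ‖u‖ :=
          norm_sub_le_of_le (norm_sub_le_of_le hexp norm_one.le) le_rfl
      _ ≤ 3 * ‖u‖ := by linarith
  calc ‖phiTwo u‖ ≤ 3 * ‖u‖ / ‖u‖ ^ 2 := by
        rw [phiTwo_of_ne_zero hu0, norm_div, norm_pow]
        gcongr
    _ = 3 * ‖u⁻¹‖ := by rw [norm_inv]; field_simp

lemma isBigO_phiTwo_two_pi_I_mul :
    (fun z => phiTwo (2 * Real.pi * I * z)) =O[upperCobounded] Inv.inv := by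
  have hmul : Tendsto (2 * Real.pi * I * ·) upperCobounded (cobounded ℂ ⊓ 𝓟 {u | u.re ≤ 0}) :=
    (tendsto_mul_left_cobounded two_pi_I_ne_zero).inf <| tendsto_principal_principal.mpr
      fun z (hz : 0 ≤ z.im) => by simpa using by positivity
  refine (isBigO_phiTwo.comp_tendsto hmul).trans ?_
  exact (isBigO_const_mul_self (2 * Real.pi * I : ℂ)⁻¹ Inv.inv _).congr_left fun z =>
    (mul_inv _ z).symm

lemma four_pi_sq_mul_phiTwo_two_pi_I_mul {z : ℂ} (hz : z ≠ 0) :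
    4 * (Real.pi : ℂ) ^ 2 * phiTwo (2 * Real.pi * I * z) =
      (1 - exp (2 * Real.pi * I * z) + 2 * Real.pi * I * z) / z ^ 2 := by
  have hpi : (Real.pi : ℂ) ≠ 0 := ofReal_ne_zero.mpr Real.pi_ne_zero
  rw [phiTwo_of_ne_zero (mul_ne_zero two_pi_I_ne_zero hz), mul_pow, mul_pow, I_sq]
  field_simp
  ring

lemma diffContOnCl_phiTwo_two_pi_I_mul (s : Set ℂ) :
    DiffContOnCl ℂ (fun z => phiTwo (2 * Real.pi * I * z)) s :=
  (differentiable_phiTwo.comp (differentiable_id.const_mul _)).diffContOnCl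

lemma integrable_inv_sub_smul_phiTwo {w : ℂ} (hw : w.im ≠ 0) :
    Integrable fun v : ℝ => (v - w : ℂ)⁻¹ • phiTwo (2 * Real.pi * I * v) := by
  refine integrable_inv_sub_smul hw (continuous_comp_ofReal_of_diffContOnCl_upperHalfPlaneSet
    (diffContOnCl_phiTwo_two_pi_I_mul _)) ?_
  exact (isBigO_phiTwo_two_pi_I_mul.comp_tendsto tendsto_ofReal_upperCobounded).trans <|
    .of_bound' (.of_forall fun v => by simp)

lemma tendsto_phiTwo_two_pi_I_mul :
    Tendsto (fun z => phiTwo (2 * Real.pi * I * z)) upperCobounded (𝓝 0) :=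
  isBigO_phiTwo_two_pi_I_mul.trans_tendsto (tendsto_inv₀_cobounded.mono_left inf_le_left)

lemma integral_inv_sub_smul_phiTwo_of_im_pos {w : ℂ} (hw : 0 < w.im) :
    ∫ v : ℝ, (v - w : ℂ)⁻¹ • phiTwo (2 * Real.pi * I * v) =
      2 * Real.pi * I * phiTwo (2 * Real.pi * I * w) :=
  integral_eq_of_tendsto_intervalIntegral_symm (integrable_inv_sub_smul_phiTwo hw.ne') <|
    tendsto_intervalIntegral_inv_sub_smul_of_im_pos (f := fun z => phiTwo (2 * Real.pi * I * z))
      (diffContOnCl_phiTwo_two_pi_I_mul _) tendsto_phiTwo_two_pi_I_mul hw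

lemma integral_inv_sub_smul_phiTwo_of_im_neg {w : ℂ} (hw : w.im < 0) :
    ∫ v : ℝ, (v - w : ℂ)⁻¹ • phiTwo (2 * Real.pi * I * v) = 0 :=
  integral_eq_of_tendsto_intervalIntegral_symm (integrable_inv_sub_smul_phiTwo hw.ne) <|
    tendsto_intervalIntegral_inv_sub_smul_of_im_neg (f := fun z => phiTwo (2 * Real.pi * I * z))
      (diffContOnCl_phiTwo_two_pi_I_mul _) tendsto_phiTwo_two_pi_I_mul hw

end PhiTwo

end

/-- The residue computation behind the second moment of `ξ_∞′/ξ_∞`: for `w ∈ ℂ` with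
`Im w ≠ 0`, the function `v ↦ (1 − e^{2πiv} + 2πiv)/(v²(w − v))`, extended continuously at
`v = 0` (by its limit `2π²/w`), is absolutely integrable on `ℝ`, and
`(1/(4π²)) ∫_ℝ (1 − e^{2πiv} + 2πiv)/(v²(w − v)) dv` equals
`(1 − e^{2πiw} + 2πiw)/(2πiw²)` if `Im w > 0`, and `0` if `Im w < 0`. -/
theorem stmt_18 (w : ℂ) (hw : w.im ≠ 0) (g : ℝ → ℂ)
    (hg : ∀ v : ℝ, v ≠ 0 →
      g v = (1 - Complex.exp (2 * Real.pi * Complex.I * v) + 2 * Real.pi * Complex.I * v) /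
        ((v : ℂ) ^ 2 * (w - v)))
    (hg0 : g 0 = 2 * Real.pi ^ 2 / w) :
    Integrable g ∧
    (0 < w.im →
      (1 / (4 * (Real.pi : ℂ) ^ 2)) * ∫ v : ℝ, g v
        = (1 - Complex.exp (2 * Real.pi * Complex.I * w) + 2 * Real.pi * Complex.I * w) /
            (2 * Real.pi * Complex.I * w ^ 2)) ∧
    (w.im < 0 → (1 / (4 * (Real.pi : ℂ) ^ 2)) * ∫ v : ℝ, g v = 0) := by
  have hg_ae : (fun v : ℝ => -(4 * (Real.pi : ℂ) ^ 2) *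
      ((v - w : ℂ)⁻¹ • phiTwo (2 * Real.pi * Complex.I * v))) =ᵐ[volume] g := by
    filter_upwards [volume.ae_ne 0] with v hv
    rw [hg v hv, ← div_div, ← four_pi_sq_mul_phiTwo_two_pi_I_mul (Complex.ofReal_ne_zero.mpr hv),
      ← neg_sub (v : ℂ) w, div_neg, div_eq_mul_inv, smul_eq_mul]
    ring
  have hscale : (1 / (4 * (Real.pi : ℂ) ^ 2)) * ∫ v, g v =
      -∫ v : ℝ, (v - w : ℂ)⁻¹ • phiTwo (2 * Real.pi * Complex.I * v) := by
    rw [← integral_congr_ae hg_ae, integral_const_mul]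
    field
  rw [hscale]
  refine ⟨((integrable_inv_sub_smul_phiTwo hw).const_mul _).congr hg_ae, fun him => ?_,
    fun him => by rw [integral_inv_sub_smul_phiTwo_of_im_neg him, neg_zero]⟩
  have hw0 : w ≠ 0 := fun h => hw (h ▸ Complex.zero_im)
  rw [integral_inv_sub_smul_phiTwo_of_im_pos him, mul_comm _ (w ^ 2), ← div_div,
    ← four_pi_sq_mul_phiTwo_two_pi_I_mul hw0, eq_div_iff Complex.two_pi_I_ne_zero]
  linear_combination
    -4 * (Real.pi : ℂ) ^ 2 * phiTwo (2 * Real.pi * Complex.I * w) * Complex.I_sq
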